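/- Let P ∈ ℝ and ν ∈ ℝ. Define, for (x, y, z) ∈ ℝ³ with (x, y, z) ≠ 0 and writing r = √(x² + y²), R = √(x² + y² + z²), the cylindrical stress components σ_rr = (P/(2π)) · ( (1 − 2ν)/(R(z + R)) − 3r²z/R⁵ ), σ_θθ = (P(1 − 2ν)/(2π)) · ( z/R³ − 1/(R(z + R)) ), σ_zz = −3Pz³/(2πR⁵), σ_rz = −3Prz²/(2πR⁵), σ_rθ = 0, σ_θz = 0, and let σ : ℝ³ \ {0} → ℝ³ˣ³ be the corresponding symmetric Cartesian stress tensor obtained by the standard cylindrical-to-Cartesian tensor transformation (with e_r = (x/r, y/r, 0), e_θ = (−y/r, x/r, 0), e_z = (0, 0, 1)). Then at every point of the open half-space {(x, y, z) : z > 0} \ {0} the stress tensor satisfies the equilibrium equations div σ = 0, i.e. for each i ∈ {1, 2, 3}, ∑_j ∂σ_ij/∂x_j = 0. -/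

import Mathlib

noncomputable section

open Matrix

/-- Partial derivative in the first (x) coordinate. -/
def pdx (f : ℝ × ℝ × ℝ → ℝ) (p : ℝ × ℝ × ℝ) : ℝ :=
  deriv (fun t => f (t, p.2.1, p.2.2)) p.1

/-- Partial derivative in the second (y) coordinate. -/
def pdy (f : ℝ × ℝ × ℝ → ℝ) (p : ℝ × ℝ × ℝ) : ℝ :=
  deriv (fun t => f (p.1, t, p.2.2)) p.2.1

/-- Partial derivative in the third (z) coordinate. -/
def pdz (f : ℝ × ℝ × ℝ → ℝ) (p : ℝ × ℝ × ℝ) : ℝ :=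
  deriv (fun t => f (p.1, p.2.1, t)) p.2.2

/-- The Cartesian Boussinesq stress tensor, obtained from the cylindrical components
`σ_rr, σ_θθ, σ_zz, σ_rz` (with `σ_rθ = σ_θz = 0`) by the standard
cylindrical-to-Cartesian tensor transformation
`σ = σ_rr e_r⊗e_r + σ_θθ e_θ⊗e_θ + σ_zz e_z⊗e_z + σ_rz (e_r⊗e_z + e_z⊗e_r)`. -/
def bstress (P ν : ℝ) (p : ℝ × ℝ × ℝ) : Matrix (Fin 3) (Fin 3) ℝ :=
  let x := p.1; let y := p.2.1; let z := p.2.2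
  let r := Real.sqrt (x ^ 2 + y ^ 2)
  let R := Real.sqrt (x ^ 2 + y ^ 2 + z ^ 2)
  let σrr : ℝ := P / (2 * Real.pi) *
    ((1 - 2 * ν) / (R * (z + R)) - 3 * r ^ 2 * z / R ^ 5)
  let σθθ : ℝ := P * (1 - 2 * ν) / (2 * Real.pi) *
    (z / R ^ 3 - 1 / (R * (z + R)))
  let σzz : ℝ := -(3 * P * z ^ 3) / (2 * Real.pi * R ^ 5)
  let σrz : ℝ := -(3 * P * r * z ^ 2) / (2 * Real.pi * R ^ 5)
  let er : Fin 3 → ℝ := ![x / r, y / r, 0]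
  let eθ : Fin 3 → ℝ := ![-y / r, x / r, 0]
  let ez : Fin 3 → ℝ := ![0, 0, 1]
  σrr • vecMulVec er er + σθθ • vecMulVec eθ eθ + σzz • vecMulVec ez ez +
    σrz • (vecMulVec er ez + vecMulVec ez er)

lemma aux_R {f : ℝ → ℝ} {f' x : ℝ} (hf : HasDerivAt f f' x) (h : 0 < f x) :
    HasDerivAt (fun t => Real.sqrt (f t)) (f' / (2 * Real.sqrt (f x))) x :=
  hf.sqrt h.ne'

lemma aux_Rx (x y z : ℝ) (hz : 0 < z) :
    HasDerivAt (fun t => Real.sqrt (t ^ 2 + y ^ 2 + z ^ 2))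
      (x / Real.sqrt (x ^ 2 + y ^ 2 + z ^ 2)) x := by
  have h : HasDerivAt (fun t : ℝ => t ^ 2 + y ^ 2 + z ^ 2) (2 * x) x := by
    simpa using ((hasDerivAt_pow 2 x).add_const (y ^ 2)).add_const (z ^ 2)
  have := aux_R h (by positivity)
  convert this using 1
  rw [mul_div_mul_left _ _ two_ne_zero]

lemma aux_Ry (x y z : ℝ) (hz : 0 < z) :
    HasDerivAt (fun t => Real.sqrt (x ^ 2 + t ^ 2 + z ^ 2))
      (y / Real.sqrt (x ^ 2 + y ^ 2 + z ^ 2)) y := by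
  have := aux_Rx y x z hz
  simpa only [add_comm] using this

lemma aux_Rz (x y z : ℝ) (hz : 0 < z) :
    HasDerivAt (fun t => Real.sqrt (x ^ 2 + y ^ 2 + t ^ 2))
      (z / Real.sqrt (x ^ 2 + y ^ 2 + z ^ 2)) z := by
  have h : HasDerivAt (fun t : ℝ => x ^ 2 + y ^ 2 + t ^ 2) (2 * z) z := by
    simpa using (hasDerivAt_pow 2 z).const_add (x ^ 2 + y ^ 2)
  have := aux_R h (by positivity)
  convert this using 1
  rw [mul_div_mul_left _ _ two_ne_zero]

/-- derivative of `A/(s) * (α/(R(z+R)) + β z/R^3) + γ z / R^5 ` pieces. -/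
lemma aux_a {R : ℝ → ℝ} {x z w : ℝ} (hR : HasDerivAt R (w / R x) x) (h : 0 < R x) (hz : 0 < z) :
    HasDerivAt (fun t => 1 / (R t * (z + R t)))
      (-(w * (z + 2 * R x)) / (R x ^ 3 * (z + R x) ^ 2)) x := by
  have h2 : 0 < z + R x := by positivity
  have := (hasDerivAt_const x (1:ℝ)).div (hR.mul (hR.const_add z)) (mul_pos h h2).ne'
  refine HasDerivAt.congr_deriv (f := fun t => 1 / (R t * (z + R t))) this ?_
  simp only [Pi.mul_apply]
  field_simp
  ring

lemma aux_p {R : ℝ → ℝ} {x w : ℝ} (n : ℕ) (hR : HasDerivAt R (w / R x) x) (h : 0 < R x) :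
    HasDerivAt (fun t => 1 / R t ^ n) (-(n * w) / R x ^ (n + 2)) x := by
  have := (hasDerivAt_const x (1:ℝ)).div (hR.pow n) (pow_pos h n).ne'
  refine HasDerivAt.congr_deriv (f := fun t => 1 / R t ^ n) this ?_
  simp only [Pi.pow_apply]
  rcases n with _ | n
  · simp
  · simp only [Nat.add_sub_cancel]
    field_simp
    ring

def s00 (K c x y z : ℝ) : ℝ :=
  K * (c * ((1 / (√(x ^ 2 + y ^ 2 + z ^ 2) * (z + √(x ^ 2 + y ^ 2 + z ^ 2)))) * x ^ 2
   + (z * (1 / √(x ^ 2 + y ^ 2 + z ^ 2) ^ 3) -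
     1 / (√(x ^ 2 + y ^ 2 + z ^ 2) * (z + √(x ^ 2 + y ^ 2 + z ^ 2)))) * y ^ 2) * (1 / (x ^ 2 + y ^ 2))
   - 3 * z * (x ^ 2 * ((x ^ 2 + y ^ 2) * (1 / (x ^ 2 + y ^ 2)))) * (1 / √(x ^ 2 + y ^ 2 + z ^ 2) ^ 5))

def s01 (K c x y z : ℝ) : ℝ :=
  K * (c * (2 * (1 / (√(x ^ 2 + y ^ 2 + z ^ 2) * (z + √(x ^ 2 + y ^ 2 + z ^ 2))))
   - z * (1 / √(x ^ 2 + y ^ 2 + z ^ 2) ^ 3)) * (x * y) * (1 / (x ^ 2 + y ^ 2))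
   - 3 * z * (x * y * ((x ^ 2 + y ^ 2) * (1 / (x ^ 2 + y ^ 2)))) * (1 / √(x ^ 2 + y ^ 2 + z ^ 2) ^ 5))

def s02 (K x y z : ℝ) : ℝ :=
  K * (-3 * x * (z ^ 2 * (1 / √(x ^ 2 + y ^ 2 + z ^ 2) ^ 5)))

def s22 (K x y z : ℝ) : ℝ :=
  K * (-3 * (z ^ 3 * (1 / √(x ^ 2 + y ^ 2 + z ^ 2) ^ 5)))

lemma row0 (K c x y z : ℝ) (hz : 0 < z) :
    deriv (fun t => s00 K c t y z) x + deriv (fun t => s01 K c x t z) y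
      + deriv (fun t => s02 K x y t) z = 0 := by
  by_cases hs : x ^ 2 + y ^ 2 = 0
  · have hx : x = 0 := by nlinarith [sq_nonneg x, sq_nonneg y]
    have hy : y = 0 := by nlinarith [sq_nonneg x, sq_nonneg y]
    subst hx hy
    have h1 : deriv (fun t => s00 K c t 0 z) 0 = 0 := by
      have h := deriv_comp_neg (fun t => s00 K c t 0 z) 0
      have h' : (fun t => s00 K c (-t) 0 z) = fun t => s00 K c t 0 z := by
        funext t; simp [s00]
      rw [h', neg_zero] at h
      linarith
    rw [h1]
    simp [s01, s02]
  have hR0 : 0 < √(x ^ 2 + y ^ 2 + z ^ 2) := by positivity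
  have hRR : √(x ^ 2 + y ^ 2 + z ^ 2) ^ 2 = x ^ 2 + y ^ 2 + z ^ 2 := Real.sq_sqrt (by positivity)
  have hx2 : HasDerivAt (fun t : ℝ => t ^ 2) (2 * x) x := by simpa using hasDerivAt_pow 2 x
  have hz2 : HasDerivAt (fun t : ℝ => t ^ 2) (2 * z) z := by simpa using hasDerivAt_pow 2 z
  have hsx : HasDerivAt (fun t : ℝ => 1 / (t ^ 2 + y ^ 2)) (-(2 * x) / (x ^ 2 + y ^ 2) ^ 2) x := by
    simp only [one_div]
    exact (hx2.add_const (y ^ 2)).inv hs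
  have hsy : HasDerivAt (fun t : ℝ => 1 / (x ^ 2 + t ^ 2)) (-(2 * y) / (x ^ 2 + y ^ 2) ^ 2) y := by
    have hy2 : HasDerivAt (fun t : ℝ => t ^ 2) (2 * y) y := by simpa using hasDerivAt_pow 2 y
    simp only [one_div]
    exact (hy2.const_add (x ^ 2)).inv hs
  have hsx1 : HasDerivAt (fun t : ℝ => t ^ 2 * ((t ^ 2 + y ^ 2) * (1 / (t ^ 2 + y ^ 2)))) (2 * x) x := by
    refine hx2.congr_of_eventuallyEq ?_
    have hc : ContinuousAt (fun t : ℝ => t ^ 2 + y ^ 2) x := by fun_prop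
    filter_upwards [hc.eventually_ne hs] with t ht
    field_simp
  have hsy1 : HasDerivAt (fun t : ℝ => x * t * ((x ^ 2 + t ^ 2) * (1 / (x ^ 2 + t ^ 2)))) x y := by
    have hl : HasDerivAt (fun t : ℝ => x * t) x y := by simpa using (hasDerivAt_id y).const_mul x
    refine hl.congr_of_eventuallyEq ?_
    have hc : ContinuousAt (fun t : ℝ => x ^ 2 + t ^ 2) y := by fun_prop
    filter_upwards [hc.eventually_ne hs] with t ht
    field_simp
  have hl : HasDerivAt (fun t : ℝ => x * t) x y := by simpa using (hasDerivAt_id y).const_mul x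
  have rx := aux_Rx x y z hz
  have ry := aux_Ry x y z hz
  have rz := aux_Rz x y z hz
  have ax := aux_a rx hR0 hz
  have ay := aux_a ry hR0 hz
  have p3x := aux_p 3 rx hR0
  have p3y := aux_p 3 ry hR0
  have p5x := aux_p 5 rx hR0
  have p5y := aux_p 5 ry hR0
  have p5z := aux_p 5 rz hR0
  have D0 := (((((ax.mul hx2).add (((p3x.const_mul z).sub ax).mul_const (y ^ 2))).const_mul c).mul
    hsx).sub ((hsx1.const_mul (3 * z)).mul p5x)).const_mul K
  have D1 := ((((((ay.const_mul 2).sub (p3y.const_mul z)).const_mul c).mul hl).mul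
    hsy).sub ((hsy1.const_mul (3 * z)).mul p5y)).const_mul K
  have D2 := ((hz2.mul p5z).const_mul (-3 * x)).const_mul K
  have E0 : deriv (fun t => s00 K c t y z) x = _ := D0.deriv
  have E1 : deriv (fun t => s01 K c x t z) y = _ := D1.deriv
  have E2 : deriv (fun t => s02 K x y t) z = _ := D2.deriv
  rw [E0, E1, E2]
  simp only [Pi.mul_apply, Pi.add_apply, Pi.sub_apply]
  generalize √(x ^ 2 + y ^ 2 + z ^ 2) = R at *
  have h2 : 0 < z + R := by positivity
  clear E0 E1 E2 D0 D1 D2 rx ry rz ax ay p3x p3y p5x p5y p5z hsx hsy hsx1 hsy1 hx2 hz2 hl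
  obtain ⟨s, hs'⟩ : ∃ s, s = x ^ 2 + y ^ 2 := ⟨_, rfl⟩
  rw [← hs'] at hs hRR ⊢
  have hy : y ^ 2 = s - x ^ 2 := by linarith
  have hsR : s = R ^ 2 - z ^ 2 := by linarith
  rw [hy]
  field_simp
  rw [hy, hsR]
  push_cast
  ring

lemma row2 (K x y z : ℝ) (hz : 0 < z) :
    deriv (fun t => s02 K t y z) x + deriv (fun t => s02 K t x z) y
      + deriv (fun t => s22 K x y t) z = 0 := by
  have hR0 : 0 < √(x ^ 2 + y ^ 2 + z ^ 2) := by positivity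
  have hRR : √(x ^ 2 + y ^ 2 + z ^ 2) ^ 2 = x ^ 2 + y ^ 2 + z ^ 2 := Real.sq_sqrt (by positivity)
  have hz3 : HasDerivAt (fun t : ℝ => t ^ 3) (3 * z ^ 2) z := by simpa using hasDerivAt_pow 3 z
  have p5x := aux_p 5 (aux_Rx x y z hz) hR0
  have p5y := aux_p 5 (aux_Ry x y z hz) hR0
  have p5z := aux_p 5 (aux_Rz x y z hz) hR0
  have D0 := (((hasDerivAt_id x).const_mul (-3)).mul (p5x.const_mul (z ^ 2))).const_mul K
  have D1 := (((hasDerivAt_id y).const_mul (-3)).mul (p5y.const_mul (z ^ 2))).const_mul K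
  have D2 := ((hz3.mul p5z).const_mul (-3)).const_mul K
  have E0 : deriv (fun t => s02 K t y z) x = _ := D0.deriv
  have E1 : deriv (fun t => s02 K t x z) y = _ :=
    Eq.trans (by congr 1; funext t; simp only [s02, add_comm (t ^ 2) (x ^ 2)]; rfl) D1.deriv
  have E2 : deriv (fun t => s22 K x y t) z = _ := D2.deriv
  rw [E0, E1, E2]
  simp only [Pi.mul_apply, Pi.add_apply, Pi.sub_apply, id]
  generalize √(x ^ 2 + y ^ 2 + z ^ 2) = R at *
  clear E0 E1 E2 D0 D1 D2 p5x p5y p5z hz3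
  have hy : y ^ 2 = R ^ 2 - x ^ 2 - z ^ 2 := by linarith
  field_simp
  ring_nf
  rw [hy]
  ring

lemma e00 (P ν x y z : ℝ) : bstress P ν (x, y, z) 0 0 = s00 (P / (2 * Real.pi)) (1 - 2 * ν) x y z := by
  have h : √(x ^ 2 + y ^ 2) ^ 2 = x ^ 2 + y ^ 2 := Real.sq_sqrt (by positivity)
  simp [bstress, s00]
  generalize √(x ^ 2 + y ^ 2) = r at *
  rw [← h]
  simp only [div_eq_mul_inv, mul_inv]
  ring

lemma e11 (P ν x y z : ℝ) : bstress P ν (x, y, z) 1 1 = s00 (P / (2 * Real.pi)) (1 - 2 * ν) y x z := by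
  have h : √(x ^ 2 + y ^ 2) ^ 2 = x ^ 2 + y ^ 2 := Real.sq_sqrt (by positivity)
  simp [bstress, s00]
  simp only [add_comm (y ^ 2) (x ^ 2)]
  generalize √(x ^ 2 + y ^ 2) = r at *
  rw [← h]
  simp only [div_eq_mul_inv, mul_inv]
  ring

lemma e01 (P ν x y z : ℝ) : bstress P ν (x, y, z) 0 1 = s01 (P / (2 * Real.pi)) (1 - 2 * ν) x y z := by
  have h : √(x ^ 2 + y ^ 2) ^ 2 = x ^ 2 + y ^ 2 := Real.sq_sqrt (by positivity)
  simp [bstress, s01]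
  generalize √(x ^ 2 + y ^ 2) = r at *
  rw [← h]
  simp only [div_eq_mul_inv, mul_inv]
  ring

lemma e10 (P ν x y z : ℝ) : bstress P ν (x, y, z) 1 0 = s01 (P / (2 * Real.pi)) (1 - 2 * ν) y x z := by
  have h : √(x ^ 2 + y ^ 2) ^ 2 = x ^ 2 + y ^ 2 := Real.sq_sqrt (by positivity)
  simp [bstress, s01]
  simp only [add_comm (y ^ 2) (x ^ 2)]
  generalize √(x ^ 2 + y ^ 2) = r at *
  rw [← h]
  simp only [div_eq_mul_inv, mul_inv]
  ring

lemma aux_r (x y : ℝ) : √(x ^ 2 + y ^ 2) * (x / √(x ^ 2 + y ^ 2)) = x := by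
  by_cases h : x ^ 2 + y ^ 2 = 0
  · have hx : x = 0 := by nlinarith [sq_nonneg x, sq_nonneg y]
    simp [hx]
  · have : 0 < √(x ^ 2 + y ^ 2) := by positivity
    field_simp

lemma e02 (P ν x y z : ℝ) : bstress P ν (x, y, z) 0 2 = s02 (P / (2 * Real.pi)) x y z := by
  have h := aux_r x y
  simp [bstress, s02]
  generalize √(x ^ 2 + y ^ 2) = r at *
  generalize x / r = u at *
  have h3 : 3 * x * z ^ 2 = 3 * (r * u) * z ^ 2 := by rw [h]
  simp only [div_eq_mul_inv, mul_inv]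
  generalize (√(x ^ 2 + y ^ 2 + z ^ 2) ^ 5)⁻¹ = q
  linear_combination P * 2⁻¹ * Real.pi⁻¹ * q * h3

lemma e20 (P ν x y z : ℝ) : bstress P ν (x, y, z) 2 0 = s02 (P / (2 * Real.pi)) x y z := by
  rw [← e02 P ν]
  simp [bstress]

lemma e12 (P ν x y z : ℝ) : bstress P ν (x, y, z) 1 2 = s02 (P / (2 * Real.pi)) y x z := by
  rw [← e02 P ν]
  simp [bstress, add_comm (y ^ 2) (x ^ 2)]

lemma e21 (P ν x y z : ℝ) : bstress P ν (x, y, z) 2 1 = s02 (P / (2 * Real.pi)) y x z := by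
  rw [← e12 P ν]
  simp [bstress]

lemma e22 (P ν x y z : ℝ) : bstress P ν (x, y, z) 2 2 = s22 (P / (2 * Real.pi)) x y z := by
  simp [bstress, s22, div_eq_mul_inv]
  ring

/-- At every point of the open half-space `{z > 0} \ {0}`, the Cartesian Boussinesq stress
tensor satisfies the equilibrium equations `div σ = 0`:
for each row `i`, `∑ⱼ ∂σ_ij/∂x_j = 0`. -/
theorem boussinesq_stress_equilibrium
    (P ν : ℝ) (p : ℝ × ℝ × ℝ) (hz : 0 < p.2.2) (hp : p ≠ (0, 0, 0)) :
    ∀ i : Fin 3,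
      pdx (fun q => bstress P ν q i 0) p +
      pdy (fun q => bstress P ν q i 1) p +
      pdz (fun q => bstress P ν q i 2) p = 0 := by
  obtain ⟨x, y, z⟩ := p
  intro i
  simp only [pdx, pdy, pdz]
  simp only at hz
  fin_cases i
  · simp only [Fin.zero_eta, e00, e01, e02]
    exact row0 _ _ _ _ _ hz
  · simp only [Fin.mk_one, e10, e11, e12]
    rw [add_comm (deriv _ x)]
    exact row0 _ _ _ _ _ hz
  · simp only [Fin.reduceFinMk, e20, e21, e22]
    exact row2 _ _ _ _ hz
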